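/- Let η ≥ 1 be an integer and let G be a finite simple graph containing a clique J with |J| = η + 1 and a vertex u ∈ J such that no vertex of J ∖ {u} has a neighbor outside J. Then: (i) every η-treedepth deletion set of G contains at least one vertex of J; and (ii) every connected η-treedepth deletion set S of G that is not contained in J satisfies u ∈ S. -/

import Mathlib

/-!
Treedepth is monotone under passing to induced subgraphs, so the complement of an `η`-treedepth
deletion set cannot contain a vertex set `J` with `td(G[J]) > η`. If the deletion set is moreover
connected and leaves `J`, some edge inside it leads out of `J`, and `u` is the only vertex of `J`
at which such an edge can start. A clique on `η + 1` vertices has treedepth greater than `η`, since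
deleting a vertex leaves a smaller clique.
-/

open SimpleGraph Set

variable {V : Type*}

/-- The connected component of `x` inside the induced subgraph `G[S]`, as a subset of `V`. -/
def compIn (G : SimpleGraph V) (S : Set V) (x : V) : Set V :=
  {y | ∃ (hx : x ∈ S) (hy : y ∈ S), (G.induce S).Reachable ⟨x, hx⟩ ⟨y, hy⟩}

/-- `tdLE G n S` means that the treedepth of the induced subgraph `G[S]` is at most `n`,
following the recursive definition of treedepth: a graph has treedepth at most `n+1`
iff from every connected component one can delete a vertex leaving a graph of
treedepth at most `n`; only the empty graph has treedepth at most `0`. -/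
def tdLE (G : SimpleGraph V) : ℕ → Set V → Prop
  | 0, S => S = ∅
  | n+1, S => ∀ x ∈ S, ∃ v ∈ compIn G S x, tdLE G n (compIn G S x \ {v})

/-- The treedepth of the induced subgraph `G[S]`. -/
noncomputable def td (G : SimpleGraph V) (S : Set V) : ℕ :=
  sInf {n | tdLE G n S}

/-- `N_G(C)`: the set of vertices outside `C` having a neighbor in `C`. -/
def nbhd (G : SimpleGraph V) (C : Set V) : Set V :=
  {v | v ∉ C ∧ ∃ u ∈ C, G.Adj u v}

/-- `C` is a connected component of the induced subgraph `G[R]`. -/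
def IsCompOf (G : SimpleGraph V) (R C : Set V) : Prop :=
  ∃ x ∈ R, C = compIn G R x

/-- `S` is an `η`-treedepth deletion set of `G`: `td(G − S) ≤ η`. -/
def IsTDS (G : SimpleGraph V) (η : ℕ) (S : Set V) : Prop :=
  td G Sᶜ ≤ η

/-- `S` is a connected `η`-treedepth deletion set of `G`. -/
def IsCTDS (G : SimpleGraph V) (η : ℕ) (S : Set V) : Prop :=
  IsTDS G η S ∧ S.Nonempty ∧ (G.induce S).Connected

/-- A rooted forest with vertex set `A ⊆ V`, given by its (reflexive) ancestor relation:
`anc u v` means `u` is an ancestor of `v` (every vertex being an ancestor of itself). -/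
structure RootedForest (V : Type*) (A : Set V) where
  anc : V → V → Prop
  mem_left : ∀ {u v}, anc u v → u ∈ A
  mem_right : ∀ {u v}, anc u v → v ∈ A
  refl : ∀ v ∈ A, anc v v
  trans : ∀ {u v w}, anc u v → anc v w → anc u w
  antisymm : ∀ {u v}, anc u v → anc v u → u = v
  chain : ∀ {u w v}, anc u v → anc w v → anc u w ∨ anc w u

/-- Depth of a rooted forest: the maximum number of vertices on a root-to-leaf path,
i.e. the maximum number of ancestors of a vertex. -/
noncomputable def RootedForest.depth [Fintype V] {A : Set V} (F : RootedForest V A) : ℕ :=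
  Finset.univ.sup fun v : V => {u | F.anc u v}.ncard

/-- `F` is a treedepth decomposition of `G[A]`: the endpoints of every edge of `G[A]`
are in ancestor-descendant relation in `F`. -/
def IsTDDecompOn (G : SimpleGraph V) (A : Set V) (F : RootedForest V A) : Prop :=
  ∀ u v, u ∈ A → v ∈ A → G.Adj u v → F.anc u v ∨ F.anc v u

/-- `A` is an `(x,y)`-vertex cut in `G`: `A` avoids `x` and `y` and there is
no path from `x` to `y` in `G − A`. -/
def IsVertexCut (G : SimpleGraph V) (x y : V) (A : Set V) : Prop :=
  ∃ (hx : x ∈ Aᶜ) (hy : y ∈ Aᶜ), ¬ (G.induce Aᶜ).Reachable ⟨x, hx⟩ ⟨y, hy⟩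

/-- The weight of a subgraph: the sum of the weights of its edges. -/
noncomputable def subWeight (w : Sym2 V → ℕ) {G : SimpleGraph V} (T : G.Subgraph) : ℕ :=
  ∑ᶠ e ∈ T.edgeSet, w e

/-- The leaves (vertices with exactly one neighbor) of a subgraph. -/
def subLeaves {G : SimpleGraph V} (T : G.Subgraph) : Set V :=
  {v | (T.neighborSet v).ncard = 1}

/-- `T` is a Steiner tree for the terminal set `R` in `G`. -/
def IsSteinerTree (G : SimpleGraph V) (R : Set V) (T : G.Subgraph) : Prop :=
  T.coe.IsTree ∧ R ⊆ T.verts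

/-- `T` is a `t`-component for `R`: a tree with at most `t` leaves, all of which lie in `R`. -/
def IsTComponent (G : SimpleGraph V) (R : Set V) (t : ℕ) (T : G.Subgraph) : Prop :=
  T.coe.IsTree ∧ (subLeaves T).ncard ≤ t ∧ subLeaves T ⊆ R

section Treedepth

variable {G : SimpleGraph V} {S T K : Set V} {x : V} {m n : ℕ}

theorem compIn_subset : compIn G S x ⊆ S :=
  fun _ ⟨_, hy, _⟩ => hy

theorem mem_compIn_self (hx : x ∈ S) : x ∈ compIn G S x :=
  ⟨hx, hx, Reachable.refl _⟩

theorem compIn_mono (hST : S ⊆ T) : compIn G S x ⊆ compIn G T x :=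
  fun _ ⟨hx, hy, hxy⟩ => ⟨hST hx, hST hy, hxy.map (G.induceHomOfLE hST).toHom⟩

theorem compIn_eq_of_isClique (hK : G.IsClique K) (hx : x ∈ K) : compIn G K x = K := by
  refine compIn_subset.antisymm fun y hy => ⟨hx, hy, ?_⟩
  rcases eq_or_ne x y with rfl | hxy
  · exact Reachable.refl _
  · exact Adj.reachable (induce_adj.2 (hK hx hy hxy))

theorem tdLE_empty : tdLE G n ∅ := by
  cases n with
  | zero => rfl
  | succ n => exact fun _ hx => hx.elim

theorem tdLE_mono (hmn : m ≤ n) (hST : S ⊆ T) (hT : tdLE G m T) : tdLE G n S := by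
  induction m generalizing n S T with
  | zero =>
    obtain rfl : T = ∅ := hT
    obtain rfl := subset_empty_iff.1 hST
    exact tdLE_empty
  | succ m ih =>
    obtain ⟨n, rfl⟩ := Nat.exists_eq_add_of_le' (Nat.le_of_add_left_le hmn)
    intro x hx
    obtain ⟨v, -, hv⟩ := hT x (hST hx)
    have hcomp : compIn G S x ⊆ compIn G T x := compIn_mono hST
    by_cases hvS : v ∈ compIn G S x
    · exact ⟨v, hvS, ih (by omega) (sdiff_subset_sdiff_left hcomp) hv⟩
    -- `G[S]` may lose `v` from the component of `x`; then any vertex can be deleted instead.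
    · have hsub : compIn G S x \ {x} ⊆ compIn G T x \ {v} :=
        sdiff_subset.trans (subset_sdiff_singleton hcomp hvS)
      exact ⟨x, mem_compIn_self hx, ih (by omega) hsub hv⟩

theorem tdLE_of_ncard_le (hS : S.Finite) (hn : S.ncard ≤ n) : tdLE G n S := by
  induction n generalizing S with
  | zero => exact (ncard_eq_zero hS).1 (Nat.le_zero.1 hn)
  | succ n ih =>
    intro x hx
    have hsub : compIn G S x \ {x} ⊆ S \ {x} := sdiff_subset_sdiff_left compIn_subset
    have hcard : (compIn G S x \ {x}).ncard < S.ncard :=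
      (ncard_le_ncard hsub hS.sdiff).trans_lt (ncard_sdiff_singleton_lt_of_mem hx hS)
    exact ⟨x, mem_compIn_self hx, ih (hS.sdiff.subset hsub) (by omega)⟩

theorem td_le_iff_tdLE (hS : S.Finite) : td G S ≤ n ↔ tdLE G n S := by
  have hmem : tdLE G (td G S) S :=
    Nat.sInf_mem (s := {n | tdLE G n S}) ⟨_, tdLE_of_ncard_le hS le_rfl⟩
  exact ⟨fun hn => tdLE_mono hn Subset.rfl hmem, fun h => Nat.sInf_le h⟩

theorem ncard_le_of_tdLE_of_isClique (hK : G.IsClique K) (h : tdLE G n K) : K.ncard ≤ n := by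
  induction n generalizing K with
  | zero =>
    obtain rfl : K = ∅ := h
    simp
  | succ n ih =>
    rcases K.eq_empty_or_nonempty with rfl | ⟨x, hx⟩
    · simp
    obtain ⟨v, -, hv⟩ := h x hx
    rw [compIn_eq_of_isClique hK hx] at hv
    have hle : (K \ {v}).ncard ≤ n := ih (hK.subset sdiff_subset) hv
    have hpred : K.ncard - 1 ≤ (K \ {v}).ncard := pred_ncard_le_ncard_sdiff_singleton K v
    omega

theorem exists_adj_of_preconnected_induce (hS : (G.induce S).Preconnected)
    (hST : (S ∩ T).Nonempty) (hnot : ¬ S ⊆ T) : ∃ a ∈ S ∩ T, ∃ b ∈ S \ T, G.Adj a b := by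
  obtain ⟨a, haS, haT⟩ := hST
  obtain ⟨b, hbS, hbT⟩ := not_subset.1 hnot
  obtain ⟨p⟩ := hS ⟨a, haS⟩ ⟨b, hbS⟩
  obtain ⟨d, -, hfst, hsnd⟩ := p.exists_boundary_dart (Subtype.val ⁻¹' T) haT hbT
  exact ⟨d.fst, ⟨d.fst.2, hfst⟩, d.snd, ⟨d.snd.2, hsnd⟩, d.adj⟩

end Treedepth

theorem stmt6_general {V : Type*} {η : ℕ} {G : SimpleGraph V} {J : Set V} {u : V}
    (hJ : ¬ tdLE G η J) (hpriv : ∀ w ∈ J \ {u}, ∀ x, G.Adj w x → x ∈ J) :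
    (∀ S, tdLE G η Sᶜ → (S ∩ J).Nonempty) ∧
    (∀ S, tdLE G η Sᶜ → (G.induce S).Preconnected → ¬ S ⊆ J → u ∈ S) := by
  have hmeet : ∀ S, tdLE G η Sᶜ → (S ∩ J).Nonempty := fun S hS =>
    not_disjoint_iff_nonempty_inter.1 fun hdisj =>
      hJ (tdLE_mono le_rfl hdisj.subset_compl_left hS)
  refine ⟨hmeet, fun S hS hconn hnot => ?_⟩
  obtain ⟨a, ⟨haS, haJ⟩, b, ⟨-, hbJ⟩, hab⟩ :=
    exists_adj_of_preconnected_induce hconn (hmeet S hS) hnot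
  have hau : a = u := by_contra fun hne => hbJ (hpriv a ⟨haJ, hne⟩ b hab)
  exact hau ▸ haS

/-- if `J` is a clique of size `η + 1` in `G` and `u ∈ J` is such that no
vertex of `J ∖ {u}` has a neighbor outside `J`, then (i) every `η`-treedepth deletion set
meets `J`, and (ii) every connected `η`-treedepth deletion set not contained in `J`
contains `u`. -/
theorem stmt6 {V : Type*} [Fintype V] (η : ℕ) (hη : 1 ≤ η) (G : SimpleGraph V)
    (J : Set V) (hclique : G.IsClique J) (hcard : J.ncard = η + 1)
    (u : V) (hu : u ∈ J) (hpriv : ∀ w ∈ J \ {u}, ∀ x, G.Adj w x → x ∈ J) :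
    (∀ S, IsTDS G η S → (S ∩ J).Nonempty) ∧
    (∀ S, IsCTDS G η S → ¬ S ⊆ J → u ∈ S) := by
  have hJ : ¬ tdLE G η J := fun h => by
    have hle : J.ncard ≤ η := ncard_le_of_tdLE_of_isClique hclique h
    omega
  obtain ⟨hmeet, hmem⟩ := stmt6_general hJ hpriv
  exact ⟨fun S hS => hmeet S ((td_le_iff_tdLE (toFinite _)).1 hS), fun S ⟨hS, _, hconn⟩ =>
    hmem S ((td_le_iff_tdLE (toFinite _)).1 hS) hconn.preconnected⟩
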